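/- Let d = 7. The function f_1(ρ) = (1+ρ²)^{-2} solves the mode ODE with parameter λ = 3, i.e., (1−ρ²)f_1''(ρ) + (6/ρ − 10ρ)f_1'(ρ) − (20 − 432/(3+3ρ²)²)f_1(ρ) = 0 for all ρ > 0. -/

import Mathlib

/-!
Put `s = c + ρ²`, where `d = 3c + 4`, so that the potential of the mode ODE is
`8c(d - 1)/s²`. Inserting `s⁻²` into the ODE gives a combination of `s⁻²`, `s⁻³` and `s⁻⁴`. The
coefficient of `s⁻⁴` vanishes identically, that of `s⁻²` is `(λ - 2)(3 - λ)`, and that of `s⁻³`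
is `8(1 + (2 - λ)c)`. Both of these vanish exactly when `λ = 3` and `c = 1`, that is, `d = 7`.
-/

open Filter Topology

variable {𝕜 : Type*} [NontriviallyNormedField 𝕜]

section Derivatives

variable {c x : 𝕜}

lemma hasDerivAt_const_add_sq_zpow (m : ℤ) (hx : c + x ^ 2 ≠ 0) :
    HasDerivAt (fun y ↦ (c + y ^ 2) ^ m) (2 * m * x * (c + x ^ 2) ^ (m - 1)) x := by
  have inner : HasDerivAt (fun y ↦ c + y ^ 2) (2 * x) x := by
    simpa using (hasDerivAt_pow 2 x).const_add c
  exact ((hasDerivAt_zpow m (c + x ^ 2) (.inl hx)).comp x inner).congr_deriv (by ring)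

lemma eventually_const_add_sq_ne_zero (hx : c + x ^ 2 ≠ 0) : ∀ᶠ y in 𝓝 x, c + y ^ 2 ≠ 0 :=
  (by fun_prop : ContinuousAt (fun y ↦ c + y ^ 2) x).eventually_ne hx

lemma iteratedDeriv_two_const_add_sq_zpow (m : ℤ) (hx : c + x ^ 2 ≠ 0) :
    iteratedDeriv 2 (fun y ↦ (c + y ^ 2) ^ m) x =
      2 * m * (c + x ^ 2) ^ (m - 1) + 4 * m * (m - 1) * x ^ 2 * (c + x ^ 2) ^ (m - 2) := by
  have deriv_eq : deriv (fun y ↦ (c + y ^ 2) ^ m) =ᶠ[𝓝 x]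
      fun y ↦ 2 * m * y * (c + y ^ 2) ^ (m - 1) :=
    (eventually_const_add_sq_ne_zero hx).mono fun y hy ↦
      (hasDerivAt_const_add_sq_zpow m hy).deriv
  have second : HasDerivAt (fun y ↦ 2 * m * y * (c + y ^ 2) ^ (m - 1))
      (2 * m * 1 * (c + x ^ 2) ^ (m - 1) +
        2 * m * x * (2 * (m - 1 : ℤ) * x * (c + x ^ 2) ^ (m - 1 - 1))) x :=
    ((hasDerivAt_id' x).const_mul (2 * m : 𝕜)).fun_mul (hasDerivAt_const_add_sq_zpow (m - 1) hx)
  rw [iteratedDeriv_succ, iteratedDeriv_one, deriv_eq.deriv_eq, second.deriv,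
    show m - 1 - 1 = m - 2 by ring]
  push_cast
  ring

end Derivatives

/-- The left-hand side at `ρ` of the mode ODE, in dimension `d` and with spectral parameter `lam`,
of the cubic wave equation linearized around its self-similar solution. The dimension is taken in
the scalar field, so that it can be varied along with `lam`. -/
noncomputable def modeOperator (d lam : 𝕜) (f : 𝕜 → 𝕜) (ρ : 𝕜) : 𝕜 :=
  (1 - ρ ^ 2) * iteratedDeriv 2 f ρ + ((d - 1) / ρ - 2 * (lam + 2) * ρ) * deriv f ρ
    - ((lam + 1) * (lam + 2) - 24 * (d - 1) * (d - 4) / (d - 4 + 3 * ρ ^ 2) ^ 2) * f ρ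

lemma modeOperator_congr {f g : 𝕜 → 𝕜} {ρ : 𝕜} (hfg : f =ᶠ[𝓝 ρ] g) (d lam : 𝕜) :
    modeOperator d lam f ρ = modeOperator d lam g ρ := by
  simp only [modeOperator, hfg.iteratedDeriv_eq, hfg.deriv_eq, hfg.eq_of_nhds]

lemma modeOperator_const_add_sq_zpow_neg_two (h3 : (3 : 𝕜) ≠ 0) (lam : 𝕜) {c ρ : 𝕜}
    (hρ : ρ ≠ 0) (hs : c + ρ ^ 2 ≠ 0) :
    modeOperator (3 * c + 4) lam (fun x ↦ (c + x ^ 2) ^ (-2 : ℤ)) ρ =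
      (lam - 2) * (3 - lam) * (c + ρ ^ 2) ^ (-2 : ℤ) +
        8 * (1 + (2 - lam) * c) * (c + ρ ^ 2) ^ (-3 : ℤ) := by
  have potential : 24 * (3 * c + 4 - 1) * (3 * c + 4 - 4) / (3 * c + 4 - 4 + 3 * ρ ^ 2) ^ 2 =
      24 * c * (c + 1) * (c + ρ ^ 2) ^ (-2 : ℤ) := by
    rw [show 3 * c + 4 - 4 + 3 * ρ ^ 2 = 3 * (c + ρ ^ 2) by ring]
    field_simp
    ring
  rw [modeOperator, potential, iteratedDeriv_two_const_add_sq_zpow (-2) hs,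
    (hasDerivAt_const_add_sq_zpow (-2) hs).deriv]
  norm_num only [Int.cast_neg, Int.cast_ofNat]
  field_simp
  ring

theorem unstable_mode_solves_mode_ODE_d7_general (h3 : (3 : 𝕜) ≠ 0) {f₁ : 𝕜 → 𝕜} {ρ : 𝕜}
    (hρ : ρ ≠ 0) (hs : 1 + ρ ^ 2 ≠ 0) (hf₁ : f₁ =ᶠ[𝓝 ρ] fun x ↦ ((1 + x ^ 2) ^ 2)⁻¹) :
    (1 - ρ ^ 2) * iteratedDeriv 2 f₁ ρ
      + (6 / ρ - 10 * ρ) * deriv f₁ ρ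
      - (20 - 432 / (3 + 3 * ρ ^ 2) ^ 2) * f₁ ρ = 0 := by
  have hf₁' : f₁ =ᶠ[𝓝 ρ] fun x ↦ (1 + x ^ 2) ^ (-2 : ℤ) := by
    simpa only [zpow_neg, zpow_ofNat] using hf₁
  calc
    _ = modeOperator (3 * 1 + 4) 3 f₁ ρ := by
      rw [modeOperator]
      norm_num only
    _ = modeOperator (3 * 1 + 4) 3 (fun x ↦ (1 + x ^ 2) ^ (-2 : ℤ)) ρ := modeOperator_congr hf₁' _ _
    _ = 0 := by
      rw [modeOperator_const_add_sq_zpow_neg_two h3 3 hρ hs]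
      ring

/-- For `d = 7`, the function `f₁(ρ) = (1+ρ²)⁻²` solves the mode ODE with parameter
`λ = 3` for all `ρ > 0`. -/
theorem unstable_mode_solves_mode_ODE_d7
    (f₁ : ℝ → ℝ)
    (hf₁ : ∀ ρ, f₁ ρ = ((1 + ρ ^ 2) ^ 2)⁻¹) :
    ∀ ρ : ℝ, 0 < ρ →
      (1 - ρ ^ 2) * iteratedDeriv 2 f₁ ρ
        + (6 / ρ - 10 * ρ) * deriv f₁ ρ
        - (20 - 432 / (3 + 3 * ρ ^ 2) ^ 2) * f₁ ρ = 0 := by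
  intro ρ hρ
  exact unstable_mode_solves_mode_ODE_d7_general three_ne_zero hρ.ne' (by positivity)
    (.of_forall hf₁)
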